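/- There exist absolute constants c > 0 and α ≥ 0 such that for all finite nonempty A, B ⊆ F_p with |B| ≤ |A| ≤ p^{1/2}, one has max{|A+B|/|A|, |AB|/|A|} ≥ c(log|A|)^{−α}·(|B|⁶/|A|⁵)^{1/14}. -/

import Mathlib

open Finset Pointwise

section Pluennecke
variable {G ι : Type*} [AddCommGroup G] [DecidableEq G]

lemma singleton_add_inter_neg_singleton_add (x : G) (X Z : Finset G) :
    {x} + (X ∩ ({-x} + Z)) = ({x} + X) ∩ Z := by
  rw [singleton_add_inter, ← add_assoc ({x} : Finset G), singleton_add_singleton, add_neg_cancel,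
    singleton_zero, zero_add]

/-- The inductive step of Petridis' argument. The subset of `X` that is discarded does not
depend on the summand `Y`. -/
lemma card_insert_add_add_le (x : G) (C X Y : Finset G) :
    #(insert x C + X + Y) + #(X ∩ ({-x} + (C + X)) + Y) ≤ #(C + X + Y) + #(X + Y) := by
  set X' := X ∩ ({-x} + (C + X))
  have h₀ : {x} + X' = ({x} + X) ∩ (C + X) := singleton_add_inter_neg_singleton_add x X (C + X)
  have h₁ : insert x C + X + Y = (C + X + Y) ∪ ({x} + X + Y) \ ({x} + X' + Y) := by
    rw [insert_eq, union_comm, union_add, union_add]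
    refine (sup_sdiff_eq_sup ?_).symm
    rw [h₀]
    gcongr
    exact inter_subset_right
  have h₂ : {x} + X' + Y ⊆ {x} + X + Y := by gcongr; exact inter_subset_left
  have h₃ : #({x} + X + Y) = #(X + Y) := by rw [add_assoc, card_singleton_add]
  have h₄ : #({x} + X' + Y) = #(X' + Y) := by rw [add_assoc, card_singleton_add]
  have h₅ := card_union_le (C + X + Y) (({x} + X + Y) \ ({x} + X' + Y))
  have h₆ := card_sdiff_add_card_eq_card h₂
  rw [h₁]
  omega

lemma card_insert_add_add_card_inter (x : G) (C X : Finset G) :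
    #(insert x C + X) + #(X ∩ ({-x} + (C + X))) = #(C + X) + #X := by
  set X' := X ∩ ({-x} + (C + X))
  have h₀ : {x} + X' = ({x} + X) ∩ (C + X) := singleton_add_inter_neg_singleton_add x X (C + X)
  rw [insert_eq, union_add, ← card_singleton_add x X', h₀, card_union_add_card_inter,
    card_singleton_add, add_comm]

/-- A weighted form of the Plünnecke–Petridis inequality with several summands. -/
lemma sum_mul_card_add_add_le (s : Finset ι) (w : ι → ℝ) (Y : ι → Finset G) {X : Finset G} {κ : ℝ}
    (hw : ∀ i ∈ s, 0 ≤ w i) (hX : ∑ i ∈ s, w i * #(X + Y i) = κ * #X)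
    (hmin : ∀ X' ⊆ X, κ * #X' ≤ ∑ i ∈ s, w i * #(X' + Y i)) (C : Finset G) :
    ∑ i ∈ s, w i * #(C + X + Y i) ≤ κ * #(C + X) := by
  induction C using Finset.induction_on with
  | empty => simp
  | insert x C _ ih =>
    have h₁ : ∑ i ∈ s, w i * #(insert x C + X + Y i) +
        ∑ i ∈ s, w i * #(X ∩ ({-x} + (C + X)) + Y i) ≤
        ∑ i ∈ s, w i * #(C + X + Y i) + ∑ i ∈ s, w i * #(X + Y i) := by
      simp only [← sum_add_distrib, ← mul_add]
      exact sum_le_sum fun i hi ↦ mul_le_mul_of_nonneg_left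
        (mod_cast card_insert_add_add_le x C X (Y i)) (hw i hi)
    have h₂ := hmin (X ∩ ({-x} + (C + X))) inter_subset_left
    have h₃ : (#(insert x C + X) : ℝ) + #(X ∩ ({-x} + (C + X))) = #(C + X) + #X :=
      mod_cast card_insert_add_add_card_inter x C X
    have h₄ := congrArg (κ * ·) h₃
    simp only [mul_add] at h₄
    linarith

/-- One subset of `A` has small growth with respect to all the summands `Y i` at once. -/
lemma exists_subset_card_add_add_le [Fintype ι] {A : Finset G} (hA : A.Nonempty)
    (Y : ι → Finset G) (hY : ∀ i, (Y i).Nonempty) :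
    ∃ X ⊆ A, X.Nonempty ∧ ∀ (C : Finset G) (i : ι),
      #(C + X + Y i) * #A ≤ Fintype.card ι * #(A + Y i) * #(C + X) := by
  have hAY i : (0 : ℝ) < #(A + Y i) := mod_cast (hA.add (hY i)).card_pos
  have hA₀ : (0 : ℝ) < #A := mod_cast hA.card_pos
  let f (X : Finset G) : ℝ := (∑ i, (#(A + Y i) : ℝ)⁻¹ * #(X + Y i)) / #X
  have hA' : A ∈ A.powerset.erase ∅ := mem_erase_of_ne_of_mem hA.ne_empty (mem_powerset_self _)
  obtain ⟨X, hX, hmin⟩ := exists_min_image (A.powerset.erase ∅) f ⟨A, hA'⟩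
  rw [mem_erase, mem_powerset, ← nonempty_iff_ne_empty] at hX
  have hX₀ : (0 : ℝ) < #X := mod_cast hX.1.card_pos
  have hκ : f X ≤ Fintype.card ι / #A := by
    refine (hmin A hA').trans_eq ?_
    simp only [f]
    rw [sum_congr rfl fun i _ ↦ inv_mul_cancel₀ (hAY i).ne']
    simp
  refine ⟨X, hX.2, hX.1, fun C i ↦ ?_⟩
  have key := sum_mul_card_add_add_le univ (fun i ↦ (#(A + Y i) : ℝ)⁻¹) Y (X := X) (κ := f X)
    (fun i _ ↦ by positivity) (div_mul_cancel₀ _ hX₀.ne').symm (fun X' hX' ↦ by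
      obtain rfl | h := X'.eq_empty_or_nonempty
      · simp
      have := hmin X' (mem_erase_of_ne_of_mem h.ne_empty (mem_powerset.2 (hX'.trans hX.2)))
      rwa [le_div_iff₀ (mod_cast h.card_pos)] at this) C
  have h₁ : (#(A + Y i) : ℝ)⁻¹ * #(C + X + Y i) ≤ Fintype.card ι / #A * #(C + X) :=
    ((single_le_sum (f := fun i ↦ (#(A + Y i) : ℝ)⁻¹ * #(C + X + Y i))
      (fun i _ ↦ by positivity) (mem_univ i)).trans key).trans (by gcongr)
  have := hAY i
  rw [inv_mul_le_iff₀ this, div_mul_eq_mul_div, mul_div_assoc', le_div_iff₀ hA₀] at h₁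
  have h₂ : (#(C + X + Y i) * #A : ℝ) ≤ Fintype.card ι * #(A + Y i) * #(C + X) := by
    linarith
  exact_mod_cast h₂

lemma exists_subset_card_add_add_mul_sq_le {A Y₁ Y₂ : Finset G} (hA : A.Nonempty)
    (h₁ : Y₁.Nonempty) (h₂ : Y₂.Nonempty) :
    ∃ X ⊆ A, X.Nonempty ∧ #(X + Y₁ + Y₂) * #A ^ 2 ≤ 4 * (#(A + Y₁) * #(A + Y₂)) * #X := by
  obtain ⟨X, hXA, hX, h⟩ := exists_subset_card_add_add_le hA ![Y₁, Y₂]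
    (by simp [Fin.forall_fin_two, h₁, h₂])
  refine ⟨X, hXA, hX, ?_⟩
  have e₁ := h 0 0
  have e₂ := h Y₁ 1
  simp only [zero_add, Fintype.card_fin, Matrix.cons_val_zero, Matrix.cons_val_one] at e₁ e₂
  rw [add_comm Y₁] at e₂
  calc #(X + Y₁ + Y₂) * #A ^ 2 = #(X + Y₁ + Y₂) * #A * #A := by ring
    _ ≤ 2 * #(A + Y₂) * #(X + Y₁) * #A := by gcongr
    _ = 2 * #(A + Y₂) * (#(X + Y₁) * #A) := by ring
    _ ≤ 2 * #(A + Y₂) * (2 * #(A + Y₁) * #X) := by gcongr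
    _ = _ := by ring

lemma card_add_add_add_mul_pow_le {A Y₁ Y₂ Y₃ Y₄ : Finset G} (hA : A.Nonempty)
    (h₁ : Y₁.Nonempty) (h₂ : Y₂.Nonempty) (h₃ : Y₃.Nonempty) (h₄ : Y₄.Nonempty) :
    #(Y₁ + Y₂ + Y₃ + Y₄) * #A ^ 3 ≤
      256 * (#(A + Y₁) * #(A + Y₂) * #(A + Y₃) * #(A + Y₄)) := by
  obtain ⟨X, hXA, hX, h⟩ := exists_subset_card_add_add_le hA ![Y₁, Y₂, Y₃, Y₄]
    (by intro i; fin_cases i <;> simpa)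
  have e₁ : #(X + Y₁) * #A ≤ 4 * #(A + Y₁) * #X := by simpa using h 0 0
  have e₂ : #(X + Y₁ + Y₂) * #A ≤ 4 * #(A + Y₂) * #(X + Y₁) := by
    simpa [add_comm Y₁ X] using h Y₁ 1
  have e₃ : #(X + Y₁ + Y₂ + Y₃) * #A ≤ 4 * #(A + Y₃) * #(X + Y₁ + Y₂) := by
    simpa [add_comm _ X, ← add_assoc] using h (Y₁ + Y₂) 2
  have e₄ : #(X + Y₁ + Y₂ + Y₃ + Y₄) * #A ≤ 4 * #(A + Y₄) * #(X + Y₁ + Y₂ + Y₃) := by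
    simpa [add_comm _ X, ← add_assoc] using h (Y₁ + Y₂ + Y₃) 3
  have hA₀ := hA.card_pos
  have hXle : #X ≤ #A := card_le_card hXA
  have hle : #(Y₁ + Y₂ + Y₃ + Y₄) ≤ #(X + Y₁ + Y₂ + Y₃ + Y₄) := by
    rw [add_assoc X, add_assoc X, add_assoc X]
    exact card_le_card_add_left hX
  refine le_of_mul_le_mul_right ?_ hA₀
  calc #(Y₁ + Y₂ + Y₃ + Y₄) * #A ^ 3 * #A
      ≤ (#(X + Y₁ + Y₂ + Y₃ + Y₄) * #A) * #A ^ 3 := by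
        rw [mul_right_comm]; gcongr
    _ ≤ (4 * #(A + Y₄) * #(X + Y₁ + Y₂ + Y₃)) * #A ^ 3 := by gcongr ?_ * _
    _ = 4 * #(A + Y₄) * (#(X + Y₁ + Y₂ + Y₃) * #A) * #A ^ 2 := by ring
    _ ≤ 4 * #(A + Y₄) * (4 * #(A + Y₃) * #(X + Y₁ + Y₂)) * #A ^ 2 := by gcongr _ * ?_ * _
    _ = 16 * #(A + Y₄) * #(A + Y₃) * (#(X + Y₁ + Y₂) * #A) * #A := by ring
    _ ≤ 16 * #(A + Y₄) * #(A + Y₃) * (4 * #(A + Y₂) * #(X + Y₁)) * #A := by gcongr _ * ?_ * _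
    _ = 64 * #(A + Y₄) * #(A + Y₃) * #(A + Y₂) * (#(X + Y₁) * #A) := by ring
    _ ≤ 64 * #(A + Y₄) * #(A + Y₃) * #(A + Y₂) * (4 * #(A + Y₁) * #A) := by
        gcongr _ * ?_; exact e₁.trans (by gcongr)
    _ = _ := by ring

end Pluennecke

section Counting

lemma card_sq_le_card_image_mul {α β : Type*} [DecidableEq β] (S : Finset α) (f : α → β) :
    #S ^ 2 ≤ #(S.image f) * #{x ∈ S ×ˢ S | f x.1 = f x.2} := by
  have h : #{x ∈ S ×ˢ S | f x.1 = f x.2} = ∑ y ∈ S.image f, #{a ∈ S | f a = y} ^ 2 := by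
    rw [card_eq_sum_card_fiberwise (f := fun x ↦ f x.1) (t := S.image f)]
    · refine sum_congr rfl fun y _ ↦ ?_
      rw [sq, ← card_product]
      congr 1
      ext ⟨a, b⟩
      simp only [mem_filter, mem_product]
      grind
    · intro x hx
      simp only [coe_filter, mem_product, Set.mem_ofPred_eq] at hx
      exact mem_image_of_mem _ hx.1.1
  rw [h, card_eq_sum_card_image f S]
  exact sq_sum_le_card_mul_sum_sq

/-- A level set of `f` carries a logarithmic proportion of the sum of `f`. -/
lemma exists_level_set {α : Type*} (S : Finset α) (f : α → ℕ) {N : ℕ} (hN : 0 < N)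
    (hf : ∀ a ∈ S, f a ≤ N) :
    ∃ t, 0 < t ∧ (∑ a ∈ S, f a : ℝ) ≤ t * #{a ∈ S | t ≤ f a} * (1 + Real.log N) := by
  obtain ⟨t, ht, hmax⟩ := exists_max_image (Icc 1 N) (fun t ↦ t * #{a ∈ S | t ≤ f a})
    ⟨1, by simp; omega⟩
  refine ⟨t, (mem_Icc.1 ht).1, ?_⟩
  have h₁ : ∑ a ∈ S, f a = ∑ u ∈ Icc 1 N, #{a ∈ S | u ≤ f a} := by
    simp only [card_filter]
    rw [sum_comm]
    refine sum_congr rfl fun a ha ↦ ?_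
    rw [← card_filter]
    have : {u ∈ Icc 1 N | u ≤ f a} = Icc 1 (f a) := by
      ext u
      have := hf a ha
      simp only [mem_filter, mem_Icc]
      omega
    simp [this]
  have h₂ : (∑ a ∈ S, f a : ℝ) ≤ ∑ u ∈ Icc 1 N, (t * #{a ∈ S | t ≤ f a} : ℝ) * (u : ℝ)⁻¹ := by
    rw [← Nat.cast_sum, h₁, Nat.cast_sum]
    refine sum_le_sum fun u hu ↦ ?_
    have hu₀ : (0 : ℝ) < u := mod_cast (mem_Icc.1 hu).1
    rw [← div_eq_mul_inv, le_div_iff₀ hu₀, mul_comm]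
    exact mod_cast hmax u hu
  have h₃ : ∑ u ∈ Icc 1 N, (u : ℝ)⁻¹ ≤ 1 + Real.log N := by
    have := harmonic_le_one_add_log N
    rw [harmonic_eq_sum_Icc, Rat.cast_sum] at this
    simpa using this
  rw [← mul_sum] at h₂
  exact h₂.trans (by gcongr)

end Counting

section Dilates
variable {F : Type*} [Field F] [DecidableEq F]

lemma mulEnergy_le_sum_card_smul_inter_smul {A B : Finset F} (hB : 0 ∉ B) :
    mulEnergy A B ≤ ∑ b₀ ∈ B, ∑ b ∈ B, #(b • A ∩ b₀ • A) := by
  rw [mulEnergy, card_eq_sum_card_fiberwise (f := fun x ↦ x.2) (t := B ×ˢ B), sum_product_right]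
  · refine sum_le_sum fun b₀ _ ↦ sum_le_sum fun b hb ↦ ?_
    refine card_le_card_of_injOn (fun x ↦ b * x.1.1) ?_ ?_
    · rintro ⟨⟨a, a'⟩, c, c'⟩ hx
      simp only [coe_filter, mem_filter, mem_product, Set.mem_ofPred_eq, Prod.mk.injEq] at hx
      obtain ⟨⟨⟨⟨ha, ha'⟩, -⟩, h⟩, rfl, rfl⟩ := hx
      rw [mem_coe, mem_inter, mem_smul_finset, mem_smul_finset]
      exact ⟨⟨a, ha, rfl⟩, a', ha', by simp [mul_comm, h]⟩
    · rintro ⟨⟨a, a'⟩, c, c'⟩ hx ⟨⟨e, e'⟩, g, g'⟩ hy hxy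
      simp only [coe_filter, mem_filter, mem_product, Set.mem_ofPred_eq, Prod.mk.injEq] at hx hy
      obtain ⟨⟨⟨-, hc, hc'⟩, h⟩, rfl, rfl⟩ := hx
      obtain ⟨⟨-, h'⟩, rfl, rfl⟩ := hy
      have hg : g ≠ 0 := ne_of_mem_of_not_mem hc hB
      have hg' : g' ≠ 0 := ne_of_mem_of_not_mem hc' hB
      obtain rfl : a = e := mul_left_cancel₀ hg hxy
      obtain rfl : a' = e' := mul_right_cancel₀ hg' (h.symm.trans h')
      rfl
  · intro x hx
    simp only [coe_filter, mem_product, Set.mem_ofPred_eq] at hx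
    exact mem_coe.2 (mem_product.2 hx.1.2)

/-- Many dilates of `A` by elements of `B` meet a fixed dilate of `A` in a large set. -/
lemma exists_popular_dilates {A B : Finset F} (hA : A.Nonempty) (hB : B.Nonempty) (h0 : 0 ∉ B) :
    ∃ b₀ ∈ B, ∃ B₁ ⊆ B, ∃ M, 0 < M ∧ (∀ b ∈ B₁, M ≤ #(b • A ∩ b₀ • A)) ∧
      (#A ^ 2 * #B : ℝ) ≤ #(A * B) * (M * #B₁ * (1 + Real.log #A)) := by
  obtain ⟨b₀, hb₀, h⟩ : ∃ b₀ ∈ B, #A ^ 2 * #B ≤ #(A * B) * ∑ b ∈ B, #(b • A ∩ b₀ • A) := by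
    refine exists_le_of_sum_le hB ?_
    rw [sum_const, smul_eq_mul, ← mul_sum]
    calc #B * (#A ^ 2 * #B) = #A ^ 2 * #B ^ 2 := by ring
      _ ≤ #(A * B) * mulEnergy A B := le_card_mul_mul_mulEnergy A B
      _ ≤ _ := by gcongr; exact mulEnergy_le_sum_card_smul_inter_smul h0
  obtain ⟨M, hM, hle⟩ := exists_level_set B (fun b ↦ #(b • A ∩ b₀ • A)) hA.card_pos
    fun b _ ↦ (card_le_card inter_subset_left).trans card_smul_finset_le
  refine ⟨b₀, hb₀, {b ∈ B | M ≤ #(b • A ∩ b₀ • A)}, filter_subset _ _, M, hM,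
    fun b hb ↦ (mem_filter.1 hb).2, ?_⟩
  have h' : (#A ^ 2 * #B : ℝ) ≤ #(A * B) * ∑ b ∈ B, (#(b • A ∩ b₀ • A) : ℝ) := mod_cast h
  exact h'.trans (by gcongr)

lemma card_smul_add_smul_le {A B : Finset F} {b b₀ : F} {s M : ℕ} (hs : #(A + B) ≤ s)
    (hM : M ≤ #(b • A ∩ b₀ • A)) :
    M * #(b₀ • B + b • B) ≤ s ^ 2 ∧ M * #(b₀ • B + (-b) • B) ≤ s ^ 2 := by
  set P := b • A ∩ b₀ • A
  have h₁ : #(b₀ • B + P) ≤ s := by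
    refine (card_le_card ?_).trans ((card_smul_finset_le (a := b₀) (s := A + B)).trans hs)
    rw [smul_add, add_comm]
    gcongr
    exact inter_subset_right
  have h₂ : #(b • B + P) ≤ s := by
    refine (card_le_card ?_).trans ((card_smul_finset_le (a := b) (s := A + B)).trans hs)
    rw [smul_add, add_comm]
    gcongr
    exact inter_subset_left
  constructor
  · calc M * #(b₀ • B + b • B) ≤ #(b₀ • B + b • B) * #P := by rw [mul_comm]; gcongr
      _ ≤ #(b₀ • B + P) * #(P + b • B) := ruzsa_triangle_inequality_add_add_add _ _ _
      _ ≤ s * s := by rw [add_comm P]; gcongr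
      _ = s ^ 2 := by ring
  · calc M * #(b₀ • B + (-b) • B) ≤ #(b₀ • B - b • B) * #P := by
          rw [neg_smul_finset, ← sub_eq_add_neg, mul_comm]; gcongr
      _ ≤ #(b₀ • B + P) * #(b • B + P) := ruzsa_triangle_inequality_sub_add_add _ _ _
      _ ≤ s * s := by gcongr
      _ = s ^ 2 := by ring

/-- Four applications of Plünnecke's inequality with pivot `b₀ • B`. -/
lemma card_sub_smul_add_sub_smul_le {A B B₁ : Finset F} {b₀ : F} {s M : ℕ} (hb₀ : b₀ ≠ 0)
    (hB₁ : B₁ ⊆ B) (hs : #(A + B) ≤ s) (hM : ∀ b ∈ B₁, M ≤ #(b • A ∩ b₀ • A))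
    {a b c d : F} (ha : a ∈ B₁) (hb : b ∈ B₁) (hc : c ∈ B₁) (hd : d ∈ B₁) :
    #((c - d) • B₁ + (a - b) • B₁) * #B ^ 3 * M ^ 4 ≤ 256 * s ^ 8 := by
  have hB : B.Nonempty := ⟨a, hB₁ ha⟩
  have key := card_add_add_add_mul_pow_le (hB.smul_finset (a := b₀))
    (hB.smul_finset (a := c)) (hB.smul_finset (a := -d)) (hB.smul_finset (a := a))
    (hB.smul_finset (a := -b))
  rw [card_smul_finset₀ hb₀] at key
  have hsub : (c - d) • B₁ + (a - b) • B₁ ⊆ c • B + (-d) • B + a • B + (-b) • B := by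
    rw [add_assoc (c • B + (-d) • B)]
    intro x hx
    obtain ⟨_, hy, _, hz, rfl⟩ := mem_add.1 hx
    obtain ⟨u, hu, rfl⟩ := mem_smul_finset.1 hy
    obtain ⟨v, hv, rfl⟩ := mem_smul_finset.1 hz
    rw [sub_eq_add_neg, sub_eq_add_neg, add_smul, add_smul]
    exact add_mem_add
      (add_mem_add (smul_mem_smul_finset (hB₁ hu)) (smul_mem_smul_finset (hB₁ hu)))
      (add_mem_add (smul_mem_smul_finset (hB₁ hv)) (smul_mem_smul_finset (hB₁ hv)))
  have e₁ := (card_smul_add_smul_le hs (hM c hc)).1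
  have e₂ := (card_smul_add_smul_le hs (hM d hd)).2
  have e₃ := (card_smul_add_smul_le hs (hM a ha)).1
  have e₄ := (card_smul_add_smul_le hs (hM b hb)).2
  calc #((c - d) • B₁ + (a - b) • B₁) * #B ^ 3 * M ^ 4
      ≤ #(c • B + (-d) • B + a • B + (-b) • B) * #B ^ 3 * M ^ 4 := by
        gcongr
    _ ≤ 256 * (#(b₀ • B + c • B) * #(b₀ • B + (-d) • B) * #(b₀ • B + a • B) *
          #(b₀ • B + (-b) • B)) * M ^ 4 := Nat.mul_le_mul_right _ key
    _ = 256 * ((M * #(b₀ • B + c • B)) * (M * #(b₀ • B + (-d) • B)) * (M * #(b₀ • B + a • B)) *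
          (M * #(b₀ • B + (-b) • B))) := by ring
    _ ≤ 256 * (s ^ 2 * s ^ 2 * s ^ 2 * s ^ 2) :=
        Nat.mul_le_mul_left _ (Nat.mul_le_mul (Nat.mul_le_mul (Nat.mul_le_mul e₁ e₂) e₃) e₄)
    _ = 256 * s ^ 8 := by ring

/-- The ratio `(a - b) / (c - d)` lies in the quotient set while its successor does not. -/
lemma card_pow_three_le_of_add_one_notMem {B : Finset F} {a b c d : F} (hB : B.Nonempty)
    (hcd : c ≠ d)
    (h : ∀ u ∈ B, ∀ v ∈ B, ∀ x ∈ B, ∀ y ∈ B, x ≠ y →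
      (u - v) / (x - y) ≠ (a - b) / (c - d) + 1) :
    #B ^ 3 ≤ 4 * #(B + B) * #((c - d) • B + (a - b) • B) := by
  set r := (a - b) / (c - d) with hr
  have hcd' : c - d ≠ 0 := sub_ne_zero.2 hcd
  obtain ⟨X, hXB, hX, hle⟩ := exists_subset_card_add_add_mul_sq_le hB hB (hB.smul_finset (a := r))
  have hinj : #X * #B ≤ #(X + B + r • B) := by
    rw [← card_product]
    refine card_le_card_of_injOn (fun z ↦ z.1 + z.2 + r • z.2) ?_ ?_
    · rintro ⟨x, y⟩ hz
      obtain ⟨hx, hy⟩ := mem_product.1 (mem_coe.1 hz)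
      exact mem_coe.2 (add_mem_add (add_mem_add hx hy) (smul_mem_smul_finset hy))
    · rintro ⟨x, y⟩ hz ⟨x', y'⟩ hz' e
      obtain ⟨hx, hy⟩ := mem_product.1 (mem_coe.1 hz)
      obtain ⟨hx', hy'⟩ := mem_product.1 (mem_coe.1 hz')
      simp only [smul_eq_mul] at hx hy hx' hy' e
      obtain rfl : y = y' := by
        by_contra hne
        refine h x (hXB hx) x' (hXB hx') y' hy' y hy (Ne.symm hne) ?_
        rw [div_eq_iff (sub_ne_zero.2 (Ne.symm hne))]
        linear_combination e
      simpa using e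
  have hdil : #((c - d) • B + (a - b) • B) = #(B + r • B) := by
    rw [← card_smul_finset₀ hcd' (B + r • B), smul_add, smul_smul, hr,
      mul_div_cancel₀ _ hcd']
  rw [hdil]
  refine le_of_mul_le_mul_right ?_ hX.card_pos
  calc #B ^ 3 * #X = #X * #B * #B ^ 2 := by ring
    _ ≤ #(X + B + r • B) * #B ^ 2 := Nat.mul_le_mul_right _ hinj
    _ ≤ _ := hle
    _ = _ := by ring

/-- Some dilate of a small set is almost additively independent from the set. -/
lemma exists_card_sq_le_two_mul_card_add_smul [Fintype F] {B : Finset F} (hB : B.Nonempty)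
    (hF : #B ^ 2 ≤ Fintype.card F) : ∃ r : F, #B ^ 2 ≤ 2 * #(B + r • B) := by
  set S := B ×ˢ B with hS
  have hScard : #S = #B ^ 2 := by rw [hS, card_product, sq]
  have hcount : ∀ x ∈ S ×ˢ S, #{r : F | x.1.1 + r * x.1.2 = x.2.1 + r * x.2.2} ≤
      (if x.1 = x.2 then Fintype.card F else 0) + 1 := by
    rintro ⟨⟨a, c⟩, a', c'⟩ -
    split_ifs with h
    · exact (card_filter_le _ _).trans (by simp)
    · rw [zero_add, card_le_one]
      intro r hr r' hr'
      simp only [mem_filter, mem_univ, true_and, Prod.mk.injEq, not_and] at hr hr' h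
      have hc : c - c' ≠ 0 := by
        rw [sub_ne_zero]
        rintro rfl
        exact h (by simpa using hr) rfl
      refine mul_right_cancel₀ hc ?_
      linear_combination hr - hr'
  obtain ⟨r, -, hr⟩ : ∃ r ∈ (univ : Finset F),
      #{x ∈ S ×ˢ S | x.1.1 + r * x.1.2 = x.2.1 + r * x.2.2} ≤ 2 * #B ^ 2 := by
    refine exists_le_of_sum_le univ_nonempty ?_
    calc ∑ r : F, #{x ∈ S ×ˢ S | x.1.1 + r * x.1.2 = x.2.1 + r * x.2.2}
        = ∑ x ∈ S ×ˢ S, #{r : F | x.1.1 + r * x.1.2 = x.2.1 + r * x.2.2} := by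
          simp only [card_filter]
          exact sum_comm
      _ ≤ ∑ x ∈ S ×ˢ S, ((if x.1 = x.2 then Fintype.card F else 0) + 1) := sum_le_sum hcount
      _ = #S * Fintype.card F + #S * #S := by
          rw [sum_add_distrib, sum_product]
          simp
      _ ≤ #S * Fintype.card F + #S * Fintype.card F := by gcongr; rwa [hScard]
      _ = ∑ r : F, 2 * #B ^ 2 := by
          rw [sum_const, card_univ, smul_eq_mul, hScard]; ring
  have himg : S.image (fun x ↦ x.1 + r * x.2) ⊆ B + r • B := by
    intro y hy
    obtain ⟨x, hx, rfl⟩ := mem_image.1 hy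
    obtain ⟨h₁, h₂⟩ := mem_product.1 hx
    exact add_mem_add h₁ (smul_mem_smul_finset h₂)
  refine ⟨r, le_of_mul_le_mul_right ?_ (pow_pos hB.card_pos 2)⟩
  calc #B ^ 2 * #B ^ 2 = #S ^ 2 := by rw [hScard]; ring
    _ ≤ _ := card_sq_le_card_image_mul S fun x ↦ x.1 + r * x.2
    _ ≤ #(B + r • B) * (2 * #B ^ 2) := Nat.mul_le_mul (card_le_card himg) hr
    _ = _ := by ring

end Dilates

section PrimeField
variable {p : ℕ} [Fact p.Prime]

lemma exists_card_pow_three_le {B : Finset (ZMod p)} (hB : B.Nonempty) (hp : #B ^ 2 ≤ p) :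
    ∃ a ∈ B, ∃ b ∈ B, ∃ c ∈ B, ∃ d ∈ B,
      #B ^ 3 ≤ 4 * #(B + B) * #((c - d) • B + (a - b) • B) := by
  obtain ⟨b, hb⟩ | hnt := hB.exists_eq_singleton_or_nontrivial
  · exact ⟨b, by simp [hb], b, by simp [hb], b, by simp [hb], b, by simp [hb], by simp [hb]⟩
  by_cases hR : ∃ a ∈ B, ∃ b ∈ B, ∃ c ∈ B, ∃ d ∈ B, c ≠ d ∧
      ∀ u ∈ B, ∀ v ∈ B, ∀ x ∈ B, ∀ y ∈ B, x ≠ y → (u - v) / (x - y) ≠ (a - b) / (c - d) + 1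
  · obtain ⟨a, ha, b, hb, c, hc, d, hd, hcd, h⟩ := hR
    exact ⟨a, ha, b, hb, c, hc, d, hd, card_pow_three_le_of_add_one_notMem hB hcd h⟩
  push Not at hR
  have hall (n : ℕ) : ∃ a ∈ B, ∃ b ∈ B, ∃ c ∈ B, ∃ d ∈ B, c ≠ d ∧
      (a - b) / (c - d) = (n : ZMod p) := by
    induction n with
    | zero =>
      obtain ⟨c, hc, d, hd, hcd⟩ := hnt
      exact ⟨c, hc, c, hc, c, hc, d, hd, hcd, by simp⟩
    | succ n ih =>
      obtain ⟨a, ha, b, hb, c, hc, d, hd, hcd, h⟩ := ih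
      obtain ⟨u, hu, v, hv, x, hx, y, hy, hxy, e⟩ := hR a ha b hb c hc d hd hcd
      exact ⟨u, hu, v, hv, x, hx, y, hy, hxy, by rw [e, h]; simp⟩
  obtain ⟨r, hr⟩ := exists_card_sq_le_two_mul_card_add_smul hB (by rwa [ZMod.card])
  obtain ⟨a, ha, b, hb, c, hc, d, hd, hcd, h⟩ := hall r.val
  rw [ZMod.natCast_zmod_val] at h
  have hcd' : c - d ≠ 0 := sub_ne_zero.2 hcd
  have hdil : #((c - d) • B + (a - b) • B) = #(B + r • B) := by
    rw [← card_smul_finset₀ hcd' (B + r • B), smul_add, smul_smul, ← h,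
      mul_div_cancel₀ _ hcd']
  refine ⟨a, ha, b, hb, c, hc, d, hd, ?_⟩
  rw [hdil]
  calc #B ^ 3 = #B * #B ^ 2 := by ring
    _ ≤ #(B + B) * (2 * #(B + r • B)) :=
        Nat.mul_le_mul (card_le_card_add_left hB) hr
    _ ≤ _ := by nlinarith [Nat.zero_le (#(B + B) * #(B + r • B))]

lemma card_pow_mul_card_pow_le_of_zero_notMem {A B : Finset (ZMod p)} {s : ℕ} (hA : A.Nonempty)
    (hB : B.Nonempty) (h0 : 0 ∉ B) (hBA : #B ≤ #A) (hAp : #A ^ 2 ≤ p) (hadd : #(A + B) ≤ s)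
    (hmul : #(A * B) ≤ s) :
    (#B ^ 6 * #A ^ 9 : ℝ) ≤ 1024 * s ^ 14 * (1 + Real.log #A) ^ 4 := by
  obtain ⟨b₀, hb₀, B₁, hB₁, M, hM, hpop, hlarge⟩ := exists_popular_dilates hA hB h0
  have hA₀ : (0 : ℝ) < #A := mod_cast hA.card_pos
  have hB₀ : (0 : ℝ) < #B := mod_cast hB.card_pos
  set L := 1 + Real.log #A
  have hL : 0 ≤ L := by have := Real.log_natCast_nonneg #A; positivity
  have hB₁ne : B₁.Nonempty := by
    rw [nonempty_iff_ne_empty]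
    rintro rfl
    simp only [card_empty, Nat.cast_zero, mul_zero, zero_mul] at hlarge
    exact absurd hlarge (not_le.2 (by positivity))
  have hB₁₀ : (0 : ℝ) < #B₁ := mod_cast hB₁ne.card_pos
  have hM₀ : (0 : ℝ) < M := mod_cast hM
  have hB₁B := card_le_card hB₁
  obtain ⟨a, ha, b, hb, c, hc, d, hd, h⟩ := exists_card_pow_three_le hB₁ne
    ((Nat.pow_le_pow_left (hB₁B.trans hBA) 2).trans hAp)
  have hfour := card_sub_smul_add_sub_smul_le (ne_of_mem_of_not_mem hb₀ h0) hB₁ hadd hpop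
    ha hb hc hd
  have hdbl : #(B₁ + B₁) * #A ≤ s ^ 2 := by
    calc #(B₁ + B₁) * #A ≤ #(B + B) * #A := by gcongr
      _ ≤ #(B + A) * #(A + B) := ruzsa_triangle_inequality_add_add_add _ _ _
      _ ≤ s * s := by rw [add_comm B]; gcongr
      _ = s ^ 2 := by ring
  have h₁ : #B₁ ^ 3 * (#B ^ 3 * M ^ 4 * #A) ≤ 1024 * s ^ 10 := by
    calc #B₁ ^ 3 * (#B ^ 3 * M ^ 4 * #A)
        ≤ (4 * #(B₁ + B₁) * #((c - d) • B₁ + (a - b) • B₁)) * (#B ^ 3 * M ^ 4 * #A) :=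
          Nat.mul_le_mul_right _ h
      _ = 4 * (#(B₁ + B₁) * #A) * (#((c - d) • B₁ + (a - b) • B₁) * #B ^ 3 * M ^ 4) := by ring
      _ ≤ 4 * s ^ 2 * (256 * s ^ 8) := by gcongr
      _ = _ := by ring
  have h₁' : (#B₁ ^ 3 * (#B ^ 3 * M ^ 4 * #A) : ℝ) ≤ 1024 * s ^ 10 := mod_cast h₁
  have h₂ : (#A ^ 2 * #B : ℝ) ≤ s * (M * #B₁ * L) := hlarge.trans (by gcongr)
  refine le_of_mul_le_mul_right ?_ (show 0 < (#B₁ ^ 3 * M ^ 4 * #B : ℝ) by positivity)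
  calc (#B ^ 6 * #A ^ 9 : ℝ) * (#B₁ ^ 3 * M ^ 4 * #B)
      = #B₁ ^ 3 * (#B ^ 3 * M ^ 4 * #A) * (#A ^ 2 * #B) ^ 4 := by ring
    _ ≤ 1024 * s ^ 10 * (s * (M * #B₁ * L)) ^ 4 := by gcongr
    _ = 1024 * s ^ 14 * L ^ 4 * (#B₁ ^ 3 * M ^ 4 * #B₁) := by ring
    _ ≤ 1024 * s ^ 14 * L ^ 4 * (#B₁ ^ 3 * M ^ 4 * #B) := by gcongr

lemma card_pow_mul_card_pow_le {A B : Finset (ZMod p)} {s : ℕ} (hA : A.Nonempty)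
    (hB : B.Nonempty) (hBA : #B ≤ #A) (hAp : #A ^ 2 ≤ p) (hadd : #(A + B) ≤ s)
    (hmul : #(A * B) ≤ s) :
    (#B ^ 6 * #A ^ 9 : ℝ) ≤ 65536 * s ^ 14 * (1 + Real.log #A) ^ 4 := by
  have hL : 1 ≤ (1 + Real.log #A) ^ 4 :=
    one_le_pow₀ (by linarith [Real.log_natCast_nonneg #A])
  obtain ⟨b, hb⟩ | hnt := hB.exists_eq_singleton_or_nontrivial
  · have hA₁ : (1 : ℝ) ≤ #A := mod_cast hA.card_pos
    have hAs : (#A : ℝ) ≤ s := mod_cast (card_le_card_add_right hB).trans hadd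
    calc (#B ^ 6 * #A ^ 9 : ℝ) = #A ^ 9 := by simp [hb]
      _ ≤ #A ^ 14 := pow_le_pow_right₀ hA₁ (by norm_num)
      _ ≤ 65536 * s ^ 14 * 1 := by
        have := pow_le_pow_left₀ (by positivity) hAs 14
        linarith [pow_nonneg (zero_le_one.trans hA₁ |>.trans hAs) 14]
      _ ≤ _ := by gcongr
  have hsub : B.erase 0 ⊆ B := erase_subset _ _
  have hcard : #B ≤ #(B.erase 0) + 1 := by
    have := pred_card_le_card_erase (s := B) (a := 0); omega
  have hlt : 1 < #B := one_lt_card_iff_nontrivial.2 hnt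
  have h := card_pow_mul_card_pow_le_of_zero_notMem hA (card_pos.1 (by omega))
    (notMem_erase 0 B) ((card_le_card hsub).trans hBA) hAp
    ((card_le_card (add_subset_add_left hsub)).trans hadd)
    ((card_le_card (mul_subset_mul_left hsub)).trans hmul)
  have h2 : (#B : ℝ) ≤ 2 * #(B.erase 0) := by
    have : #B ≤ 2 * #(B.erase 0) := by omega
    exact_mod_cast this
  calc (#B ^ 6 * #A ^ 9 : ℝ) ≤ (2 * #(B.erase 0)) ^ 6 * #A ^ 9 := by gcongr
    _ = 64 * (#(B.erase 0) ^ 6 * #A ^ 9) := by ring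
    _ ≤ 64 * (1024 * s ^ 14 * (1 + Real.log #A) ^ 4) := by gcongr
    _ = _ := by ring

end PrimeField

theorem different_sets_small :
    ∃ c α : ℝ, 0 < c ∧ 0 ≤ α ∧ ∀ (p : ℕ), p.Prime → ∀ A B : Finset (ZMod p),
      A.Nonempty → B.Nonempty → B.card ≤ A.card → (A.card : ℝ) ≤ Real.sqrt p →
      c * (Real.log (A.card : ℝ)) ^ (-α) *
          ((B.card : ℝ) ^ 6 / (A.card : ℝ) ^ 5) ^ ((1 : ℝ) / 14) ≤
        max (((A + B).card : ℝ) / (A.card : ℝ)) (((A * B).card : ℝ) / (A.card : ℝ)) := by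
  refine ⟨(65536 * 3 ^ 4 : ℝ) ^ (-(1 / 14) : ℝ), 4 / 14, by positivity, by norm_num, ?_⟩
  intro p hp A B hA hB hBA hAp
  have := Fact.mk hp
  have hA₀ : (0 : ℝ) < #A := mod_cast hA.card_pos
  rw [max_div_div_right hA₀.le, ← Nat.cast_max]
  set s := max #(A + B) #(A * B)
  obtain hA₁ | hA₂ := (Nat.one_le_iff_ne_zero.2 hA.card_pos.ne').eq_or_lt
  · rw [← hA₁, Nat.cast_one, Real.log_one, Real.zero_rpow (by norm_num), mul_zero, zero_mul]
    positivity
  have hAp' : #A ^ 2 ≤ p := by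
    have := (Real.le_sqrt (by positivity) (by positivity)).1 hAp
    exact_mod_cast this
  have key := card_pow_mul_card_pow_le hA hB hBA hAp' (le_max_left #(A + B) #(A * B))
    (le_max_right #(A + B) #(A * B))
  set l := Real.log #A
  have hl : 1 / 2 ≤ l := by
    have h₁ := Real.log_two_gt_d9
    have h₂ : Real.log 2 ≤ l := Real.log_le_log (by norm_num) (mod_cast hA₂)
    linarith
  have hl₀ : 0 < l := by linarith
  have hfin : (#B : ℝ) ^ 6 / #A ^ 5 ≤ (s / #A : ℝ) ^ 14 * (65536 * 3 ^ 4 * l ^ 4) := by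
    rw [div_pow, div_mul_eq_mul_div, div_le_div_iff₀ (by positivity) (by positivity)]
    have : (1 + l) ^ 4 ≤ (3 * l) ^ 4 := pow_le_pow_left₀ (by positivity) (by linarith) 4
    calc (#B ^ 6 * #A ^ 14 : ℝ) = #B ^ 6 * #A ^ 9 * #A ^ 5 := by ring
      _ ≤ 65536 * s ^ 14 * (3 * l) ^ 4 * #A ^ 5 := by
        gcongr ?_ * _
        exact key.trans (by gcongr)
      _ = _ := by ring
  have hroot : ((#B : ℝ) ^ 6 / #A ^ 5) ^ ((1 : ℝ) / 14) ≤
      s / #A * ((65536 * 3 ^ 4 : ℝ) ^ ((1 : ℝ) / 14) * l ^ ((4 : ℝ) / 14)) := by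
    refine (Real.rpow_le_rpow (by positivity) hfin (by norm_num)).trans_eq ?_
    rw [Real.mul_rpow (by positivity) (by positivity),
      Real.mul_rpow (by positivity) (by positivity), ← Real.rpow_natCast, ← Real.rpow_natCast l,
      ← Real.rpow_mul (by positivity), ← Real.rpow_mul hl₀.le]
    norm_num
  rw [Real.rpow_neg (by positivity), Real.rpow_neg hl₀.le, ← mul_inv, inv_mul_le_iff₀
    (by positivity)]
  linarith
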